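/- (Nevanlinna parametrization) Let λ₁,…,λ_N be distinct points of 𝔻 and w₁,…,w_N ∈ ℂ, and suppose the Pick matrix with (i,j) entry (1 − w_i w̄_j)/(1 − λ_i λ̄_j) is positive definite (in particular invertible). Then there exist analytic functions G₁₁, G₁₂, G₂₁, G₂₂ : 𝔻 → ℂ such that the 2×2 matrix G(λ) = [[G₁₁(λ), G₁₂(λ)],[G₂₁(λ), G₂₂(λ)]] has operator norm at most 1 for every λ ∈ 𝔻, and such that a function φ : 𝔻 → ℂ is analytic with sup_{𝔻}|φ| ≤ 1 and satisfies φ(λ_i) = w_i for all i if and only if there exists an analytic ψ : 𝔻 → ℂ with sup_{𝔻}|ψ| ≤ 1 such that 1 − G₂₂(λ)ψ(λ) ≠ 0 for all λ ∈ 𝔻 and φ = G₁₁ + G₁₂ ψ G₂₁ / (1 − G₂₂ ψ). -/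

import Mathlib

open Metric Matrix
open scoped ComplexOrder

/-!
The proof is Schur's algorithm. A solution `φ` sends `λ₁` to `w₁`, so following it by the disc
automorphism which moves `w₁` to `0` gives a Schur function vanishing at `λ₁`; by the Schwarz lemma
that function is the Blaschke factor of `λ₁` times a Schur function `g`, and `g` is an arbitrary
solution of a Pick problem with one point less. The Pick matrix of the new problem is a Schur
complement of the old one up to diagonal congruence, so it stays positive definite. Conversely `φ`
is recovered from `g` by a linear fractional transformation with contractive `2 × 2` coefficient
matrix, and the Redheffer star product composes such transformations and preserves contractivity.
-/

namespace NevanlinnaPick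

open scoped ComplexConjugate

local notation "𝔻" => ball (0 : ℂ) 1

section LinearFractional

variable {K : Type*}

/-- The linear fractional transformation `M₁₁ + M₁₂ ζ M₂₁ / (1 - M₂₂ ζ)` with coefficient matrix
`M`; the indices of `M` run from `0` to `1`. -/
def lft [Field K] (M : Matrix (Fin 2) (Fin 2) K) (ζ : K) : K :=
  M 0 0 + M 0 1 * ζ * M 1 0 / (1 - M 1 1 * ζ)

/-- The Redheffer star product, the coefficient matrix of `lft H ∘ lft G`. -/
def redheffer [Field K] (H G : Matrix (Fin 2) (Fin 2) K) : Matrix (Fin 2) (Fin 2) K :=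
  !![H 0 0 + H 0 1 * G 0 0 * H 1 0 / (1 - H 1 1 * G 0 0), H 0 1 * G 0 1 / (1 - H 1 1 * G 0 0);
    G 1 0 * H 1 0 / (1 - H 1 1 * G 0 0), G 1 1 + G 1 0 * H 1 1 * G 0 1 / (1 - H 1 1 * G 0 0)]

lemma one_sub_redheffer_mul [Field K] {H G : Matrix (Fin 2) (Fin 2) K} {ζ : K}
    (h₀ : 1 - H 1 1 * G 0 0 ≠ 0) (hG : 1 - G 1 1 * ζ ≠ 0) :
    1 - redheffer H G 1 1 * ζ =
      (1 - H 1 1 * lft G ζ) * (1 - G 1 1 * ζ) / (1 - H 1 1 * G 0 0) := by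
  simp only [redheffer, lft, of_apply, cons_val]
  field_simp
  ring

lemma lft_redheffer [Field K] {H G : Matrix (Fin 2) (Fin 2) K} {ζ : K}
    (h₀ : 1 - H 1 1 * G 0 0 ≠ 0) (hG : 1 - G 1 1 * ζ ≠ 0) (hH : 1 - H 1 1 * lft G ζ ≠ 0) :
    lft (redheffer H G) ζ = lft H (lft G ζ) := by
  have hlft : lft G ζ * (1 - G 1 1 * ζ) = G 0 0 * (1 - G 1 1 * ζ) + G 0 1 * ζ * G 1 0 := by
    rw [lft, add_mul, div_mul_cancel₀ _ hG]
  rw [lft, one_sub_redheffer_mul h₀ hG, lft.eq_1 H]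
  simp only [redheffer, of_apply, cons_val]
  generalize lft G ζ = η at *
  generalize hd : 1 - H 1 1 * G 0 0 = d at *
  generalize hp : 1 - H 1 1 * η = p at *
  generalize 1 - G 1 1 * ζ = e at *
  field_simp
  rw [← hd, ← hp]
  linear_combination (-(H 0 1 * H 1 0)) * hlft

variable [NormedField K]

/-- A `2 × 2` matrix of operator norm at most `1` on Euclidean `K²`. -/
def IsContractive (M : Matrix (Fin 2) (Fin 2) K) : Prop :=
  ∀ a b : K, ‖M 0 0 * a + M 0 1 * b‖ ^ 2 + ‖M 1 0 * a + M 1 1 * b‖ ^ 2 ≤ ‖a‖ ^ 2 + ‖b‖ ^ 2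

/-- A contractive matrix whose linear fractional transformation has no pole in the closed unit
ball. -/
structure IsAdmissible (M : Matrix (Fin 2) (Fin 2) K) : Prop where
  isContractive : IsContractive M
  one_sub_ne_zero : ∀ ζ : K, ‖ζ‖ ≤ 1 → 1 - M 1 1 * ζ ≠ 0

-- `(1, ζ v)` is mapped to `(lft M ζ, v)` for `v = M₂₁ / (1 - M₂₂ ζ)`.
lemma IsAdmissible.norm_lft_le_one {M : Matrix (Fin 2) (Fin 2) K} (hM : IsAdmissible M) {ζ : K}
    (hζ : ‖ζ‖ ≤ 1) : ‖lft M ζ‖ ≤ 1 := by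
  have hne := hM.one_sub_ne_zero ζ hζ
  set v : K := M 1 0 / (1 - M 1 1 * ζ) with hv
  have fst : M 0 0 * 1 + M 0 1 * (ζ * v) = lft M ζ := by rw [lft, hv]; ring
  have snd : M 1 0 * 1 + M 1 1 * (ζ * v) = v := by rw [hv]; field_simp; ring
  have contr := hM.isContractive 1 (ζ * v)
  rw [fst, snd, norm_one, norm_mul] at contr
  have hζv : (‖ζ‖ * ‖v‖) ^ 2 ≤ ‖v‖ ^ 2 :=
    pow_le_pow_left₀ (by positivity) (mul_le_of_le_one_left (norm_nonneg v) hζ) 2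
  exact (sq_le_one_iff₀ (norm_nonneg _)).mp (by linarith)

lemma IsAdmissible.norm_apply_zero_zero_le_one {M : Matrix (Fin 2) (Fin 2) K}
    (hM : IsAdmissible M) : ‖M 0 0‖ ≤ 1 := by
  simpa [lft] using hM.norm_lft_le_one (ζ := 0) (by simp)

-- Feedback: `v` is the signal passed from `H` to `G` and `u` the one returned from `G` to `H`.
lemma IsContractive.redheffer {H G : Matrix (Fin 2) (Fin 2) K} (hH : IsContractive H)
    (hG : IsContractive G) (h₀ : 1 - H 1 1 * G 0 0 ≠ 0) : IsContractive (redheffer H G) := by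
  intro a b
  simp only [NevanlinnaPick.redheffer, of_apply, cons_val]
  generalize hd : 1 - H 1 1 * G 0 0 = d at *
  set v : K := (H 1 0 * a + H 1 1 * G 0 1 * b) / d with hv
  set u : K := G 0 0 * v + G 0 1 * b with hu
  have hv' : H 1 0 * a + H 1 1 * u = v := by rw [hu, hv]; field_simp; rw [← hd]; ring
  have fst : (H 0 0 + H 0 1 * G 0 0 * H 1 0 / d) * a + H 0 1 * G 0 1 / d * b =
      H 0 0 * a + H 0 1 * u := by
    rw [hu, hv]; field_simp; rw [← hd]; ring
  have snd : G 1 0 * H 1 0 / d * a + (G 1 1 + G 1 0 * H 1 1 * G 0 1 / d) * b =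
      G 1 0 * v + G 1 1 * b := by
    rw [hv]; field_simp; ring
  have contrH := hH a u
  have contrG := hG v b
  rw [hv'] at contrH
  rw [← hu] at contrG
  rw [fst, snd]
  linarith

lemma IsAdmissible.one_sub_mul_ne_zero {H G : Matrix (Fin 2) (Fin 2) K} (hH : IsAdmissible H)
    (hG : IsAdmissible G) : 1 - H 1 1 * G 0 0 ≠ 0 :=
  hH.one_sub_ne_zero _ hG.norm_apply_zero_zero_le_one

lemma IsAdmissible.redheffer {H G : Matrix (Fin 2) (Fin 2) K} (hH : IsAdmissible H)
    (hG : IsAdmissible G) : IsAdmissible (redheffer H G) where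
  isContractive := hH.isContractive.redheffer hG.isContractive (hH.one_sub_mul_ne_zero hG)
  one_sub_ne_zero ζ hζ := by
    have hGζ := hG.one_sub_ne_zero ζ hζ
    have hHζ := hH.one_sub_ne_zero _ (hG.norm_lft_le_one hζ)
    rw [one_sub_redheffer_mul (hH.one_sub_mul_ne_zero hG) hGζ]
    exact div_ne_zero (mul_ne_zero hHζ hGζ) (hH.one_sub_mul_ne_zero hG)

lemma IsAdmissible.lft_redheffer {H G : Matrix (Fin 2) (Fin 2) K} (hH : IsAdmissible H)
    (hG : IsAdmissible G) {ζ : K} (hζ : ‖ζ‖ ≤ 1) :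
    lft (NevanlinnaPick.redheffer H G) ζ = lft H (lft G ζ) :=
  NevanlinnaPick.lft_redheffer (hH.one_sub_mul_ne_zero hG) (hG.one_sub_ne_zero ζ hζ)
    (hH.one_sub_ne_zero _ (hG.norm_lft_le_one hζ))

end LinearFractional

section Blaschke

variable {a c z β ζ : ℂ}

/-- The Blaschke factor of `a`: the automorphism of the unit disc which sends `a` to `0`, with
inverse `blaschke (-a)`. -/
noncomputable def blaschke (a z : ℂ) : ℂ := (z - a) / (1 - conj a * z)

@[simp]
lemma blaschke_self (a : ℂ) : blaschke a a = 0 := by simp [blaschke]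

@[simp]
lemma blaschke_apply_zero (a : ℂ) : blaschke a 0 = -a := by simp [blaschke]

lemma one_sub_mul_ne_zero (ha : ‖a‖ < 1) (hz : ‖z‖ ≤ 1) : 1 - a * z ≠ 0 := by
  have h : ‖a * z‖ < 1 := by
    rw [norm_mul]
    exact mul_lt_one_of_nonneg_of_lt_one_left (norm_nonneg a) ha hz
  exact sub_ne_zero.mpr fun h' => by simp [← h'] at h

lemma one_sub_conj_mul_ne_zero (ha : ‖a‖ < 1) (hz : ‖z‖ ≤ 1) : 1 - conj a * z ≠ 0 :=
  one_sub_mul_ne_zero (by simpa) hz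

lemma one_sub_mul_conj_ne_zero (ha : ‖a‖ < 1) (hz : ‖z‖ ≤ 1) : 1 - a * conj z ≠ 0 :=
  one_sub_mul_ne_zero ha (by simpa)

lemma one_sub_blaschke_mul_conj {z' : ℂ} (ha : ‖a‖ < 1) (hz : ‖z‖ ≤ 1) (hz' : ‖z'‖ ≤ 1) :
    1 - blaschke a z * conj (blaschke a z') =
      (1 - a * conj a) * (1 - z * conj z') / ((1 - conj a * z) * (1 - a * conj z')) := by
  have h := one_sub_conj_mul_ne_zero ha hz
  have h' := one_sub_mul_conj_ne_zero ha hz'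
  simp only [blaschke, map_div₀, map_sub, map_one, map_mul, Complex.conj_conj]
  rw [div_mul_div_comm, one_sub_div (mul_ne_zero h h')]
  ring

lemma one_sub_norm_blaschke_sq (ha : ‖a‖ < 1) (hz : ‖z‖ ≤ 1) :
    1 - ‖blaschke a z‖ ^ 2 = (1 - ‖a‖ ^ 2) * (1 - ‖z‖ ^ 2) / ‖1 - conj a * z‖ ^ 2 := by
  have h := one_sub_blaschke_mul_conj ha hz hz
  rw [show 1 - a * conj z = conj (1 - conj a * z) by simp] at h
  simp only [Complex.mul_conj'] at h
  exact_mod_cast h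

lemma one_sub_norm_sq_pos (ha : ‖a‖ < 1) : 0 < 1 - ‖a‖ ^ 2 :=
  sub_pos.mpr ((sq_lt_one_iff₀ (norm_nonneg a)).mpr ha)

lemma one_sub_mul_conj_self_pos (ha : ‖a‖ < 1) : 0 < 1 - a * conj a := by
  rw [Complex.mul_conj']
  exact_mod_cast one_sub_norm_sq_pos ha

lemma norm_blaschke_le_one (ha : ‖a‖ < 1) (hz : ‖z‖ ≤ 1) : ‖blaschke a z‖ ≤ 1 := by
  have hz2 : 0 ≤ 1 - ‖z‖ ^ 2 := sub_nonneg.mpr ((sq_le_one_iff₀ (norm_nonneg z)).mpr hz)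
  have h : 0 ≤ 1 - ‖blaschke a z‖ ^ 2 := by
    rw [one_sub_norm_blaschke_sq ha hz]
    exact div_nonneg (mul_nonneg (one_sub_norm_sq_pos ha).le hz2) (sq_nonneg _)
  exact (sq_le_one_iff₀ (norm_nonneg _)).mp (sub_nonneg.mp h)

lemma norm_blaschke_lt_one (ha : ‖a‖ < 1) (hz : ‖z‖ < 1) : ‖blaschke a z‖ < 1 := by
  have hd := norm_pos_iff.mpr (one_sub_conj_mul_ne_zero ha hz.le)
  have h : 0 < 1 - ‖blaschke a z‖ ^ 2 := by
    rw [one_sub_norm_blaschke_sq ha hz.le]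
    exact div_pos (mul_pos (one_sub_norm_sq_pos ha) (one_sub_norm_sq_pos hz)) (pow_pos hd 2)
  exact (sq_lt_one_iff₀ (norm_nonneg _)).mp (sub_pos.mp h)

lemma mapsTo_blaschke (ha : ‖a‖ < 1) : Set.MapsTo (blaschke a) 𝔻 𝔻 := fun z hz => by
  rw [mem_ball_zero_iff] at hz ⊢
  exact norm_blaschke_lt_one ha hz

lemma blaschke_neg_blaschke (ha : ‖a‖ < 1) (hz : ‖z‖ ≤ 1) : blaschke (-a) (blaschke a z) = z := by
  have h : blaschke a z * (1 - conj a * z) = z - a :=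
    div_mul_cancel₀ _ (one_sub_conj_mul_ne_zero ha hz)
  rw [blaschke, div_eq_iff (one_sub_conj_mul_ne_zero (by simpa) (norm_blaschke_le_one ha hz)),
    map_neg]
  linear_combination h

lemma blaschke_blaschke_neg (ha : ‖a‖ < 1) (hz : ‖z‖ ≤ 1) : blaschke a (blaschke (-a) z) = z := by
  simpa using blaschke_neg_blaschke (a := -a) (by simpa) hz

lemma blaschke_ne_zero (ha : ‖a‖ < 1) (hz : ‖z‖ ≤ 1) (hza : z ≠ a) : blaschke a z ≠ 0 :=
  div_ne_zero (sub_ne_zero.mpr hza) (one_sub_conj_mul_ne_zero ha hz)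

lemma blaschke_neg_mul_eq_iff {w : ℂ} (hc : ‖c‖ < 1) (hw : ‖w‖ ≤ 1) (hβ : ‖β‖ ≤ 1)
    (hβ₀ : β ≠ 0) (hζ : ‖ζ‖ ≤ 1) :
    blaschke (-c) (β * ζ) = w ↔ ζ = blaschke c w / β := by
  have hβζ : ‖β * ζ‖ ≤ 1 := by
    rw [norm_mul]
    exact mul_le_one₀ hβ (norm_nonneg ζ) hζ
  rw [eq_div_iff hβ₀, mul_comm ζ]
  constructor
  · rintro rfl
    rw [blaschke_blaschke_neg hc hβζ]
  · rintro h
    rw [h, blaschke_neg_blaschke hc hw]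

lemma differentiableOn_blaschke (ha : ‖a‖ < 1) :
    DifferentiableOn ℂ (blaschke a) (closedBall 0 1) :=
  DifferentiableOn.div (by fun_prop) (by fun_prop) fun _ hz =>
    one_sub_conj_mul_ne_zero ha (mem_closedBall_zero_iff.mp hz)

/-- The coefficient matrix of `ζ ↦ blaschke (-c) (β * ζ)`, chosen to be unitary when `‖β‖ = 1`. -/
noncomputable def schurStepMatrix (c β : ℂ) : Matrix (Fin 2) (Fin 2) ℂ :=
  !![c, √(1 - ‖c‖ ^ 2) * β; √(1 - ‖c‖ ^ 2), -conj c * β]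

lemma norm_sq_add_norm_sq_eq {s : ℝ} (hs : s ^ 2 = 1 - ‖c‖ ^ 2) (x y : ℂ) :
    ‖c * x + s * y‖ ^ 2 + ‖s * x - conj c * y‖ ^ 2 = ‖x‖ ^ 2 + ‖y‖ ^ 2 := by
  simp only [Complex.sq_norm, Complex.normSq_apply, Complex.add_re, Complex.add_im,
    Complex.sub_re, Complex.sub_im, Complex.mul_re, Complex.mul_im, Complex.conj_re,
    Complex.conj_im, Complex.ofReal_re, Complex.ofReal_im] at *
  linear_combination (x.re ^ 2 + x.im ^ 2 + y.re ^ 2 + y.im ^ 2) * hs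

lemma isContractive_schurStepMatrix (hc : ‖c‖ ≤ 1) (hβ : ‖β‖ ≤ 1) :
    IsContractive (schurStepMatrix c β) := by
  intro x y
  have hs := Real.sq_sqrt (sub_nonneg.mpr ((sq_le_one_iff₀ (norm_nonneg c)).mpr hc))
  have hβy : ‖β * y‖ ^ 2 ≤ ‖y‖ ^ 2 := by
    rw [norm_mul]
    exact pow_le_pow_left₀ (by positivity) (mul_le_of_le_one_left (norm_nonneg y) hβ) 2
  have h := norm_sq_add_norm_sq_eq hs x (β * y)
  simp only [schurStepMatrix, of_apply, cons_val, neg_mul, mul_assoc, ← sub_eq_add_neg]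
  linarith

lemma isAdmissible_schurStepMatrix (hc : ‖c‖ < 1) (hβ : ‖β‖ ≤ 1) :
    IsAdmissible (schurStepMatrix c β) where
  isContractive := isContractive_schurStepMatrix hc.le hβ
  one_sub_ne_zero ζ hζ := by
    have hβζ : ‖β * ζ‖ ≤ 1 := by
      rw [norm_mul]
      exact mul_le_one₀ hβ (norm_nonneg ζ) hζ
    simpa [schurStepMatrix, mul_assoc] using
      one_sub_conj_mul_ne_zero (a := -c) (by simpa) hβζ

lemma lft_schurStepMatrix (hc : ‖c‖ < 1) (hβ : ‖β‖ ≤ 1) (hζ : ‖ζ‖ ≤ 1) :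
    lft (schurStepMatrix c β) ζ = blaschke (-c) (β * ζ) := by
  have hne := (isAdmissible_schurStepMatrix hc hβ).one_sub_ne_zero ζ hζ
  have hs : (√(1 - ‖c‖ ^ 2) : ℂ) ^ 2 = 1 - c * conj c := by
    rw [Complex.mul_conj']
    exact_mod_cast Real.sq_sqrt (one_sub_norm_sq_pos hc).le
  simp only [schurStepMatrix, of_apply, cons_val] at hne
  have hden : 1 - conj (-c) * (β * ζ) = 1 - -conj c * β * ζ := by rw [map_neg]; ring
  rw [lft, blaschke, hden]
  simp only [schurStepMatrix, of_apply, cons_val]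
  rw [eq_div_iff hne, add_mul, div_mul_cancel₀ _ hne]
  linear_combination β * ζ * hs

end Blaschke

section SchurClass

variable {φ ψ f : ℂ → ℂ} {G H : ℂ → Matrix (Fin 2) (Fin 2) ℂ} {a c : ℂ}

/-- The Schur class of analytic functions on the unit disc bounded by `1`. -/
structure IsSchur (φ : ℂ → ℂ) : Prop where
  differentiableOn : DifferentiableOn ℂ φ 𝔻
  norm_le_one : ∀ z ∈ 𝔻, ‖φ z‖ ≤ 1

lemma IsSchur.congr (hψ : IsSchur ψ) (h : Set.EqOn φ ψ 𝔻) : IsSchur φ where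
  differentiableOn := hψ.differentiableOn.congr h
  norm_le_one z hz := h hz ▸ hψ.norm_le_one z hz

lemma IsSchur.mul (hφ : IsSchur φ) (hψ : IsSchur ψ) : IsSchur fun z => φ z * ψ z where
  differentiableOn := hφ.differentiableOn.mul hψ.differentiableOn
  norm_le_one z hz := by
    rw [norm_mul]
    exact mul_le_one₀ (hφ.norm_le_one z hz) (norm_nonneg _) (hψ.norm_le_one z hz)

lemma IsSchur.blaschke_comp (hφ : IsSchur φ) (hc : ‖c‖ < 1) :
    IsSchur fun z => blaschke c (φ z) where
  differentiableOn := (differentiableOn_blaschke hc).comp hφ.differentiableOn fun z hz =>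
    mem_closedBall_zero_iff.mpr (hφ.norm_le_one z hz)
  norm_le_one z hz := norm_blaschke_le_one hc (hφ.norm_le_one z hz)

lemma isSchur_blaschke (ha : ‖a‖ < 1) : IsSchur (blaschke a) where
  differentiableOn := (differentiableOn_blaschke ha).mono ball_subset_closedBall
  norm_le_one _ hz := norm_blaschke_le_one ha (mem_ball_zero_iff.mp hz).le

lemma IsSchur.comp_blaschke (hφ : IsSchur φ) (ha : ‖a‖ < 1) :
    IsSchur fun z => φ (blaschke a z) where
  differentiableOn :=
    hφ.differentiableOn.comp (isSchur_blaschke ha).differentiableOn (mapsTo_blaschke ha)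
  norm_le_one _ hz := hφ.norm_le_one _ (mapsTo_blaschke ha hz)

lemma IsSchur.exists_eq_id_mul (hf : IsSchur f) (hf₀ : f 0 = 0) :
    ∃ g, IsSchur g ∧ ∀ z, f z = z * g z := by
  have hmaps : Set.MapsTo f 𝔻 (closedBall (f 0) 1) := fun z hz => by
    simpa [hf₀] using hf.norm_le_one z hz
  refine ⟨dslope f 0, ⟨?_, fun _ hz => ?_⟩, fun z => ?_⟩
  · exact (Complex.differentiableOn_dslope (ball_mem_nhds 0 one_pos)).mpr hf.differentiableOn
  · simpa using Complex.norm_dslope_le_div_of_mapsTo_ball hf.differentiableOn hmaps hz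
  · simpa [hf₀] using (sub_smul_dslope f 0 z).symm

lemma IsSchur.exists_eqOn_blaschke_mul (hf : IsSchur f) (ha : ‖a‖ < 1) (hfa : f a = 0) :
    ∃ g, IsSchur g ∧ Set.EqOn f (fun z => blaschke a z * g z) 𝔻 := by
  obtain ⟨g, hg, hfg⟩ :=
    (hf.comp_blaschke (a := -a) (by simpa)).exists_eq_id_mul (by simpa using hfa)
  refine ⟨_, hg.comp_blaschke ha, fun z hz => ?_⟩
  have h := hfg (blaschke a z)
  rwa [blaschke_neg_blaschke ha (mem_ball_zero_iff.mp hz).le] at h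

lemma isSchur_and_apply_eq_iff (ha : ‖a‖ < 1) (hc : ‖c‖ < 1) :
    IsSchur φ ∧ φ a = c ↔
      ∃ g, IsSchur g ∧ Set.EqOn φ (fun z => blaschke (-c) (blaschke a z * g z)) 𝔻 := by
  constructor
  · rintro ⟨hφ, rfl⟩
    obtain ⟨g, hg, hφg⟩ := (hφ.blaschke_comp hc).exists_eqOn_blaschke_mul ha (blaschke_self _)
    refine ⟨g, hg, fun z hz => ?_⟩
    simp only [← hφg hz, blaschke_neg_blaschke hc (hφ.norm_le_one z hz)]
  · rintro ⟨g, hg, hφg⟩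
    refine ⟨(((isSchur_blaschke ha).mul hg).blaschke_comp (by simpa)).congr hφg, ?_⟩
    simpa using hφg (mem_ball_zero_iff.mpr ha)

/-- An analytic family of admissible matrices on the unit disc: the coefficient matrices of
transformations `ψ ↦ lft (G z) (ψ z)` of the Schur class. -/
structure IsSchurCoefficient (G : ℂ → Matrix (Fin 2) (Fin 2) ℂ) : Prop where
  differentiableOn : ∀ i j, DifferentiableOn ℂ (fun z => G z i j) 𝔻
  isAdmissible : ∀ z ∈ 𝔻, IsAdmissible (G z)

lemma IsSchurCoefficient.redheffer (hH : IsSchurCoefficient H) (hG : IsSchurCoefficient G) :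
    IsSchurCoefficient fun z => redheffer (H z) (G z) where
  differentiableOn := by
    have hne : ∀ z ∈ 𝔻, 1 - H z 1 1 * G z 0 0 ≠ 0 := fun z hz =>
      (hH.isAdmissible z hz).one_sub_mul_ne_zero (hG.isAdmissible z hz)
    have dH := hH.differentiableOn
    have dG := hG.differentiableOn
    have dd : DifferentiableOn ℂ (fun z => 1 - H z 1 1 * G z 0 0) 𝔻 :=
      ((dH 1 1).mul (dG 0 0)).const_sub 1
    simp only [Fin.forall_fin_two, NevanlinnaPick.redheffer, of_apply, cons_val]
    exact ⟨⟨(dH 0 0).add ((((dH 0 1).mul (dG 0 0)).mul (dH 1 0)).div dd hne),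
      ((dH 0 1).mul (dG 0 1)).div dd hne⟩, ((dG 1 0).mul (dH 1 0)).div dd hne,
      (dG 1 1).add ((((dG 1 0).mul (dH 1 1)).mul (dG 0 1)).div dd hne)⟩
  isAdmissible z hz := (hH.isAdmissible z hz).redheffer (hG.isAdmissible z hz)

lemma isSchurCoefficient_schurStepMatrix (hc : ‖c‖ < 1) (hψ : IsSchur ψ) :
    IsSchurCoefficient fun z => schurStepMatrix c (ψ z) where
  differentiableOn := by
    have dψ := hψ.differentiableOn
    simp only [Fin.forall_fin_two, schurStepMatrix, of_apply, cons_val]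
    exact ⟨⟨differentiableOn_const _, dψ.const_mul _⟩, differentiableOn_const _, dψ.const_mul _⟩
  isAdmissible z hz := isAdmissible_schurStepMatrix hc (hψ.norm_le_one z hz)

end SchurClass

section PickMatrix

lemma posDef_schurComplement {K ι κ : Type*} [Field K] [PartialOrder K] [StarRing K] [Finite ι]
    {M : Matrix ι ι K} (hM : M.PosDef) {i₀ : ι} {e : κ → ι} (he : Function.Injective e)
    (he₀ : ∀ k, e k ≠ i₀) :
    (of fun k l => M (e k) (e l) - M (e k) i₀ * M i₀ (e l) / M i₀ i₀).PosDef := by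
  classical
  cases nonempty_fintype ι
  have := Finite.of_injective e he
  cases nonempty_fintype κ
  have h₀ : M i₀ i₀ ≠ 0 := hM.diag_pos.ne'
  let B : Matrix κ ι K :=
    of fun k => Pi.single (e k) 1 - Pi.single i₀ (M (e k) i₀ / M i₀ i₀)
  have hB : Function.Injective B.vecMul := fun x y hxy => funext fun k => by
    simpa [B, vecMul, dotProduct, Pi.single_apply, he₀, he.eq_iff] using congrFun hxy (e k)
  have mul_B : ∀ k j, (B * M) k j = M (e k) j - M (e k) i₀ / M i₀ i₀ * M i₀ j := fun k j => by
    simp [B, mul_apply, sub_mul, Pi.single_apply]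
  have eliminated : ∀ k, (B * M) k i₀ = 0 := fun k => by
    rw [mul_B, div_mul_cancel₀ _ h₀, sub_self]
  convert hM.mul_mul_conjTranspose_same hB using 1
  ext k l
  have row : (B * M * Bᴴ) k l = (B * M) k (e l) - (B * M) k i₀ * star (M (e l) i₀ / M i₀ i₀) := by
    rw [mul_apply]
    simp [B, mul_sub, Pi.single_apply, apply_ite star]
  rw [row, eliminated, mul_B, zero_mul, sub_zero, div_mul_eq_mul_div]
  rfl

lemma posDef_of_eq_mul_mul_star {K ι : Type*} [Field K] [PartialOrder K] [StarRing K]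
    [StarOrderedRing K] [Finite ι] {M M' : Matrix ι ι K} (hM : M.PosDef) {d : ι → K}
    (hd : ∀ i, d i ≠ 0) {r : K} (hr : 0 < r)
    (h : ∀ i j, M' i j = r * (d i * M i j * star (d j))) : M'.PosDef := by
  classical
  cases nonempty_fintype ι
  have hinj : Function.Injective (diagonal d).vecMul := fun x y hxy => funext fun i => by
    simpa [vecMul_diagonal, hd] using congrFun hxy i
  have hM' : M' = r • (diagonal d * M * (diagonal d)ᴴ) := by
    ext i j
    simp [h, diagonal_conjTranspose]
  exact hM' ▸ (hM.mul_mul_conjTranspose_same hinj).smul hr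

/-- The Pick matrix of the nodes `lam` and the values `w`. -/
noncomputable def pickMatrix {ι : Type*} (lam w : ι → ℂ) : Matrix ι ι ℂ :=
  of fun i j => (1 - w i * conj (w j)) / (1 - lam i * conj (lam j))

variable {ι κ : Type*} {lam w : ι → ℂ} {a c : ℂ}

lemma norm_lt_one_of_posDef_pickMatrix (hP : (pickMatrix lam w).PosDef) (hlam : ∀ i, ‖lam i‖ < 1)
    (i : ι) : ‖w i‖ < 1 := by
  have h : (0 : ℂ) < ((1 - ‖w i‖ ^ 2) / (1 - ‖lam i‖ ^ 2) : ℝ) := by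
    simpa [pickMatrix, Complex.mul_conj'] using hP.diag_pos (i := i)
  rw [Complex.zero_lt_real, div_pos_iff_of_pos_right (one_sub_norm_sq_pos (hlam i)), sub_pos] at h
  exact (sq_lt_one_iff₀ (norm_nonneg _)).mp h

variable [Finite ι]

lemma posDef_pickMatrix_blaschke_values (hP : (pickMatrix lam w).PosDef) (hc : ‖c‖ < 1)
    (hw : ∀ i, ‖w i‖ ≤ 1) : (pickMatrix lam fun i => blaschke c (w i)).PosDef := by
  refine posDef_of_eq_mul_mul_star hP (d := fun i => (1 - conj c * w i)⁻¹)
    (fun i => inv_ne_zero (one_sub_conj_mul_ne_zero hc (hw i)))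
    (one_sub_mul_conj_self_pos hc) fun i j => ?_
  simp only [pickMatrix, of_apply, one_sub_blaschke_mul_conj hc (hw i) (hw j), RCLike.star_def,
    map_inv₀, map_sub, map_one, map_mul, Complex.conj_conj, div_eq_mul_inv, mul_inv]
  ring

lemma posDef_pickMatrix_blaschke_nodes (hP : (pickMatrix lam w).PosDef) (ha : ‖a‖ < 1)
    (hlam : ∀ i, ‖lam i‖ ≤ 1) : (pickMatrix (fun i => blaschke a (lam i)) w).PosDef := by
  refine posDef_of_eq_mul_mul_star hP (d := fun i => 1 - conj a * lam i)
    (fun i => one_sub_conj_mul_ne_zero ha (hlam i))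
    (inv_pos.mpr (one_sub_mul_conj_self_pos ha)) fun i j => ?_
  simp only [pickMatrix, of_apply, one_sub_blaschke_mul_conj ha (hlam i) (hlam j),
    RCLike.star_def, map_sub, map_one, map_mul, Complex.conj_conj, div_eq_mul_inv, mul_inv,
    inv_inv]
  ring

lemma posDef_pickMatrix_div (hP : (pickMatrix lam w).PosDef) (hlam : ∀ i, ‖lam i‖ < 1) {i₀ : ι}
    (hlam₀ : lam i₀ = 0) (hw₀ : w i₀ = 0) {e : κ → ι} (he : Function.Injective e)
    (hne : ∀ k, lam (e k) ≠ 0) :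
    (pickMatrix (fun k => lam (e k)) fun k => w (e k) / lam (e k)).PosDef := by
  have he₀ : ∀ k, e k ≠ i₀ := fun k hk => hne k (hk ▸ hlam₀)
  have := Finite.of_injective e he
  refine posDef_of_eq_mul_mul_star (posDef_schurComplement hP he he₀)
    (fun k => inv_ne_zero (hne k)) one_pos fun k l => ?_
  have hden := one_sub_mul_conj_ne_zero (hlam (e k)) (hlam (e l)).le
  have hk := hne k
  have hl : conj (lam (e l)) ≠ 0 := (map_ne_zero _).mpr (hne l)
  simp only [pickMatrix, of_apply, hlam₀, hw₀, map_zero, mul_zero, zero_mul, sub_zero, div_one,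
    mul_one, map_div₀, RCLike.star_def, map_inv₀, one_mul]
  field_simp
  ring

lemma posDef_pickMatrix_schur_step (hP : (pickMatrix lam w).PosDef) (hlam : ∀ i, ‖lam i‖ < 1)
    (hdist : Function.Injective lam) {i₀ : ι} {e : κ → ι} (he : Function.Injective e)
    (he₀ : ∀ k, e k ≠ i₀) :
    (pickMatrix (fun k => lam (e k)) fun k =>
      blaschke (w i₀) (w (e k)) / blaschke (lam i₀) (lam (e k))).PosDef := by
  have := Finite.of_injective e he
  have hw := norm_lt_one_of_posDef_pickMatrix hP hlam
  have hblam : ∀ i, ‖blaschke (lam i₀) (lam i)‖ < 1 := fun i =>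
    norm_blaschke_lt_one (hlam i₀) (hlam i)
  have centered : (pickMatrix (fun i => blaschke (lam i₀) (lam i)) fun i =>
      blaschke (w i₀) (w i)).PosDef :=
    posDef_pickMatrix_blaschke_values (posDef_pickMatrix_blaschke_nodes hP (hlam i₀)
      fun i => (hlam i).le) (hw i₀) fun i => (hw i).le
  have divided := posDef_pickMatrix_div centered hblam (blaschke_self _) (blaschke_self _) he
    fun k => blaschke_ne_zero (hlam i₀) (hlam _).le (hdist.ne (he₀ k))
  simpa only [blaschke_neg_blaschke (hlam i₀) (hlam _).le] using
    posDef_pickMatrix_blaschke_nodes divided (a := -lam i₀) (by simpa using hlam i₀)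
      fun k => (hblam _).le

end PickMatrix

section PickProblem

/-- The solutions of the Pick problem with nodes `lam` and values `w`. -/
structure IsPickSolution {ι : Type*} (lam w : ι → ℂ) (φ : ℂ → ℂ) : Prop where
  isSchur : IsSchur φ
  apply_eq : ∀ i, φ (lam i) = w i

/-- The Nevanlinna coefficient matrices of a Pick problem: their linear fractional transformations
carry the Schur class onto the solutions. -/
structure IsNevanlinnaMatrix {ι : Type*} (lam w : ι → ℂ) (G : ℂ → Matrix (Fin 2) (Fin 2) ℂ) :
    Prop extends IsSchurCoefficient G where
  isPickSolution_iff : ∀ φ, IsPickSolution lam w φ ↔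
    ∃ ψ, IsSchur ψ ∧ Set.EqOn φ (fun z => lft (G z) (ψ z)) 𝔻

lemma isNevanlinnaMatrix_of_isEmpty {ι : Type*} [IsEmpty ι] (lam w : ι → ℂ) :
    IsNevanlinnaMatrix lam w fun _ => !![0, 1; 1, 0] where
  differentiableOn _ _ := differentiableOn_const _
  isAdmissible _ _ :=
    ⟨fun a b => by simp [add_comm], fun ζ _ => by simp⟩
  isPickSolution_iff φ := by
    have hlft : ∀ ζ : ℂ, lft !![0, 1; 1, 0] ζ = ζ := fun ζ => by simp [lft]
    simp only [hlft]
    exact ⟨fun h => ⟨φ, h.isSchur, fun _ _ => rfl⟩,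
      fun ⟨_, hψ, hφψ⟩ => ⟨hψ.congr hφψ, isEmptyElim⟩⟩

variable {N : ℕ} {lam w : Fin (N + 1) → ℂ}

lemma isPickSolution_succ_iff (hlam : ∀ i, ‖lam i‖ < 1) (hdist : Function.Injective lam)
    (hw : ∀ i, ‖w i‖ < 1) (φ : ℂ → ℂ) :
    IsPickSolution lam w φ ↔ ∃ g,
      IsPickSolution (fun i : Fin N => lam i.succ)
        (fun i => blaschke (w 0) (w i.succ) / blaschke (lam 0) (lam i.succ)) g ∧
      Set.EqOn φ (fun z => blaschke (-w 0) (blaschke (lam 0) z * g z)) 𝔻 := by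
  have interp : ∀ g, IsSchur g →
      Set.EqOn φ (fun z => blaschke (-w 0) (blaschke (lam 0) z * g z)) 𝔻 → ∀ i : Fin N,
      φ (lam i.succ) = w i.succ ↔
        g (lam i.succ) = blaschke (w 0) (w i.succ) / blaschke (lam 0) (lam i.succ) := by
    intro g hg hφg i
    have hi : lam i.succ ∈ 𝔻 := mem_ball_zero_iff.mpr (hlam _)
    rw [hφg hi]
    exact blaschke_neg_mul_eq_iff (hw 0) (hw _).le (norm_blaschke_le_one (hlam 0) (hlam _).le)
      (blaschke_ne_zero (hlam 0) (hlam _).le (hdist.ne i.succ_ne_zero)) (hg.norm_le_one _ hi)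
  constructor
  · rintro ⟨hφ, hφw⟩
    obtain ⟨g, hg, hφg⟩ := (isSchur_and_apply_eq_iff (hlam 0) (hw 0)).mp ⟨hφ, hφw 0⟩
    exact ⟨g, ⟨hg, fun i => (interp g hg hφg i).mp (hφw i.succ)⟩, hφg⟩
  · rintro ⟨g, ⟨hg, hgw⟩, hφg⟩
    obtain ⟨hφ, hφ₀⟩ := (isSchur_and_apply_eq_iff (hlam 0) (hw 0)).mpr ⟨g, hg, hφg⟩
    exact ⟨hφ, Fin.cases hφ₀ fun i => (interp g hg hφg i).mpr (hgw i)⟩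

lemma isNevanlinnaMatrix_succ (hlam : ∀ i, ‖lam i‖ < 1) (hdist : Function.Injective lam)
    (hw : ∀ i, ‖w i‖ < 1) {G : ℂ → Matrix (Fin 2) (Fin 2) ℂ}
    (hG : IsNevanlinnaMatrix (fun i : Fin N => lam i.succ)
      (fun i => blaschke (w 0) (w i.succ) / blaschke (lam 0) (lam i.succ)) G) :
    IsNevanlinnaMatrix lam w fun z =>
      redheffer (schurStepMatrix (w 0) (blaschke (lam 0) z)) (G z) where
  toIsSchurCoefficient :=
    (isSchurCoefficient_schurStepMatrix (hw 0) (isSchur_blaschke (hlam 0))).redheffer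
      hG.toIsSchurCoefficient
  isPickSolution_iff φ := by
    have lft_eq : ∀ ψ, IsSchur ψ → Set.EqOn
        (fun z => lft (redheffer (schurStepMatrix (w 0) (blaschke (lam 0) z)) (G z)) (ψ z))
        (fun z => blaschke (-w 0) (blaschke (lam 0) z * lft (G z) (ψ z))) 𝔻 := by
      intro ψ hψ z hz
      have hβ := (isSchur_blaschke (hlam 0)).norm_le_one z hz
      have hGz := hG.isAdmissible z hz
      have hψz := hψ.norm_le_one z hz
      simp only [(isAdmissible_schurStepMatrix (hw 0) hβ).lft_redheffer hGz hψz,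
        lft_schurStepMatrix (hw 0) hβ (hGz.norm_lft_le_one hψz)]
    rw [isPickSolution_succ_iff hlam hdist hw]
    constructor
    · rintro ⟨g, hg, hφg⟩
      obtain ⟨ψ, hψ, hgψ⟩ := (hG.isPickSolution_iff g).mp hg
      refine ⟨ψ, hψ, fun z hz => ?_⟩
      rw [hφg hz, lft_eq ψ hψ hz]
      simp only [hgψ hz]
    · rintro ⟨ψ, hψ, hφψ⟩
      exact ⟨_, (hG.isPickSolution_iff _).mpr ⟨ψ, hψ, fun _ _ => rfl⟩, hφψ.trans (lft_eq ψ hψ)⟩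

theorem exists_isNevanlinnaMatrix {N : ℕ} {lam w : Fin N → ℂ} (hlam : ∀ i, ‖lam i‖ < 1)
    (hdist : Function.Injective lam) (hP : (pickMatrix lam w).PosDef) :
    ∃ G, IsNevanlinnaMatrix lam w G := by
  induction N with
  | zero => exact ⟨_, isNevanlinnaMatrix_of_isEmpty lam w⟩
  | succ N ih =>
    obtain ⟨G, hG⟩ := ih (fun i => hlam i.succ) (hdist.comp (Fin.succ_injective N))
      (posDef_pickMatrix_schur_step hP hlam hdist (Fin.succ_injective N) Fin.succ_ne_zero)
    exact ⟨_, isNevanlinnaMatrix_succ hlam hdist (norm_lt_one_of_posDef_pickMatrix hP hlam) hG⟩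

end PickProblem

end NevanlinnaPick

/-- **Nevanlinna's parametrization of all solutions of a non-degenerate Pick problem.**
If the Pick matrix of the data `(λᵢ, wᵢ)` is positive definite, then there are analytic
functions `G₁₁, G₁₂, G₂₁, G₂₂` on `𝔻` such that the matrix `G(λ)` has operator norm at
most `1` on `𝔻` (expressed via its quadratic form on Euclidean `ℂ²`), and the solutions
`φ` of the Pick problem are exactly the functions
`G₁₁ + G₁₂ ψ G₂₁ / (1 - G₂₂ ψ)` with `ψ` analytic on `𝔻`, `sup_𝔻 |ψ| ≤ 1`. -/
theorem nevanlinna_parametrization {N : ℕ} (lam : Fin N → ℂ) (w : Fin N → ℂ)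
    (hlam : ∀ i, lam i ∈ ball (0 : ℂ) 1) (hdist : Function.Injective lam)
    (hPick : (Matrix.of fun i j : Fin N =>
      (1 - w i * starRingEnd ℂ (w j)) / (1 - lam i * starRingEnd ℂ (lam j))).PosDef) :
    ∃ G₁₁ G₁₂ G₂₁ G₂₂ : ℂ → ℂ,
      DifferentiableOn ℂ G₁₁ (ball (0 : ℂ) 1) ∧ DifferentiableOn ℂ G₁₂ (ball (0 : ℂ) 1) ∧
      DifferentiableOn ℂ G₂₁ (ball (0 : ℂ) 1) ∧ DifferentiableOn ℂ G₂₂ (ball (0 : ℂ) 1) ∧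
      -- the 2×2 matrix `G(λ)` is contractive for each `λ ∈ 𝔻`
      (∀ lam' ∈ ball (0 : ℂ) 1, ∀ a b : ℂ,
        ‖G₁₁ lam' * a + G₁₂ lam' * b‖ ^ 2 + ‖G₂₁ lam' * a + G₂₂ lam' * b‖ ^ 2 ≤
          ‖a‖ ^ 2 + ‖b‖ ^ 2) ∧
      ∀ φ : ℂ → ℂ,
        (DifferentiableOn ℂ φ (ball (0 : ℂ) 1) ∧ (∀ z ∈ ball (0 : ℂ) 1, ‖φ z‖ ≤ 1) ∧
          ∀ i, φ (lam i) = w i) ↔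
        (∃ ψ : ℂ → ℂ, DifferentiableOn ℂ ψ (ball (0 : ℂ) 1) ∧
          (∀ z ∈ ball (0 : ℂ) 1, ‖ψ z‖ ≤ 1) ∧
          (∀ z ∈ ball (0 : ℂ) 1, 1 - G₂₂ z * ψ z ≠ 0) ∧
          ∀ z ∈ ball (0 : ℂ) 1,
            φ z = G₁₁ z + G₁₂ z * ψ z * G₂₁ z / (1 - G₂₂ z * ψ z)) := by
  obtain ⟨G, hG⟩ := NevanlinnaPick.exists_isNevanlinnaMatrix
    (fun i => mem_ball_zero_iff.mp (hlam i)) hdist hPick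
  have dG := hG.differentiableOn
  refine ⟨fun z => G z 0 0, fun z => G z 0 1, fun z => G z 1 0, fun z => G z 1 1, dG 0 0, dG 0 1,
    dG 1 0, dG 1 1, fun z hz => (hG.isAdmissible z hz).isContractive, fun φ => ⟨?_, ?_⟩⟩
  · rintro ⟨hφ, hφ1, hφw⟩
    obtain ⟨ψ, hψ, hφψ⟩ := (hG.isPickSolution_iff φ).mp ⟨⟨hφ, hφ1⟩, hφw⟩
    exact ⟨ψ, hψ.differentiableOn, hψ.norm_le_one, fun z hz =>
      (hG.isAdmissible z hz).one_sub_ne_zero _ (hψ.norm_le_one z hz), hφψ⟩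
  · rintro ⟨ψ, hψ, hψ1, -, hφψ⟩
    obtain ⟨⟨hφ, hφ1⟩, hφw⟩ := (hG.isPickSolution_iff φ).mpr ⟨ψ, ⟨hψ, hψ1⟩, hφψ⟩
    exact ⟨hφ, hφ1, hφw⟩
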